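/- Let E, F be Banach spaces, τ a sub-cross norm on the algebraic tensor product E ⊙ F (τ(x ⊗ y) ≤ ‖x‖·‖y‖), and α, β strongly continuous one-parameter isometric representations on E and F respectively, such that for every t ∈ ℝ the map α_t ⊙ β_t is τ-continuous of norm ≤ 1. Let α ⊗_τ β be the induced strongly continuous one-parameter representation on the completion E ⊗_τ F. Then for every z ∈ ℂ, the algebraic tensor product operator α_z ⊙ β_z is closable and its closure equals (α ⊗_τ β)_z. Moreover, if C is a core for α_z and D a core for β_z, then C ⊙ D is a core for (α ⊗_τ β)_z. -/

import Mathlib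

open Complex MeasureTheory Filter Topology Set

noncomputable section

/-- The closed horizontal strip between the real axis and the line `Im = z.im`. -/
def hStrip (z : ℂ) : Set ℂ := {y : ℂ | y.im ∈ Set.uIcc 0 z.im}

/-- A strongly continuous one-parameter (contractive, hence isometric) representation. -/
structure IsOneParamRep {E : Type*} [NormedAddCommGroup E] [NormedSpace ℂ E]
    (α : ℝ → E →L[ℂ] E) : Prop where
  map_add : ∀ s t : ℝ, α (s + t) = (α s).comp (α t)
  map_zero : α 0 = ContinuousLinearMap.id ℂ E
  norm_le : ∀ t : ℝ, ‖α t‖ ≤ 1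
  strong_cont : ∀ a : E, Continuous fun t : ℝ => α t a

/-- `(a, b)` lies in the graph of the analytic continuation `α_z`:  there is a function `f`,
continuous on the strip `S(z)`, analytic in its interior, agreeing with `t ↦ α_t a` on `ℝ`,
with `f z = b`. -/
def HasContVal {E : Type*} [NormedAddCommGroup E] [NormedSpace ℂ E]
    (α : ℝ → E →L[ℂ] E) (z : ℂ) (a b : E) : Prop :=
  ∃ f : ℂ → E, ContinuousOn f (hStrip z) ∧
    DifferentiableOn ℂ f (interior (hStrip z)) ∧
    (∀ t : ℝ, f t = α t a) ∧ f z = b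

theorem hStrip_eq_preimage (z : ℂ) : hStrip z = im ⁻¹' Icc (min 0 z.im) (max 0 z.im) := rfl

theorem interior_hStrip (z : ℂ) :
    interior (hStrip z) = im ⁻¹' Ioo (min 0 z.im) (max 0 z.im) := by
  rw [hStrip_eq_preimage, Complex.interior_preimage_im, interior_Icc]

theorem ofReal_mem_hStrip (z : ℂ) (t : ℝ) : (t : ℂ) ∈ hStrip z := by
  simp [hStrip]

theorem self_mem_hStrip (z : ℂ) : z ∈ hStrip z := by
  simp [hStrip]

theorem hStrip_subset_closure_interior {z : ℂ} (hz : z.im ≠ 0) :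
    hStrip z ⊆ closure (interior (hStrip z)) := by
  have h : min 0 z.im ≠ max 0 z.im := by
    intro h
    rcases le_total 0 z.im with h' | h' <;> simp_all
  rw [interior_hStrip, Complex.closure_preimage_im, closure_Ioo h, hStrip_eq_preimage]

/-- If the product of the four rotations of `f` about `p` vanishes on the boundary of a square,
then `f` vanishes at the centre `p`. -/
theorem eq_zero_of_four_rotations {f : ℂ → ℂ} {p : ℂ} {r : ℝ} (hr : 0 < r)
    (hc : ContinuousOn f {y | |y.im - p.im| ≤ r})
    (hd : DifferentiableOn ℂ f {y | |y.im - p.im| < r})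
    (h0 : (∀ y : ℂ, y.im = p.im - r → f y = 0) ∨ (∀ y : ℂ, y.im = p.im + r → f y = 0)) :
    f p = 0 := by
  set U : Set ℂ := {w | |w.re| < r ∧ |w.im| < r} with hU
  have hre : Continuous fun w : ℂ => |w.re| := by fun_prop
  have him : Continuous fun w : ℂ => |w.im| := by fun_prop
  have hUo : IsOpen U := (isOpen_lt hre continuous_const).inter (isOpen_lt him continuous_const)
  have hUc : closure U ⊆ {w : ℂ | |w.re| ≤ r ∧ |w.im| ≤ r} := by
    refine closure_minimal (fun w hw => ⟨hw.1.le, hw.2.le⟩) ?_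
    exact (isClosed_le hre continuous_const).inter (isClosed_le him continuous_const)
  have hfac : ∀ c : ℂ, (c = 1 ∨ c = -1 ∨ c = I ∨ c = -I) →
      DiffContOnCl ℂ (fun w => f (p + c * w)) U := by
    intro c hcc
    constructor
    · refine hd.comp (by fun_prop) fun w hw => ?_
      obtain ⟨h1, h2⟩ := hw
      rcases hcc with rfl | rfl | rfl | rfl <;> simpa
    · refine hc.comp (by fun_prop) fun w hw => ?_
      obtain ⟨h1, h2⟩ := hUc hw
      rcases hcc with rfl | rfl | rfl | rfl <;> simpa
  have hb : Bornology.IsBounded U := by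
    refine (Metric.isBounded_ball (x := (0 : ℂ)) (r := r + r)).subset fun w hw => ?_
    rw [mem_ball_zero_iff]
    exact (Complex.norm_le_abs_re_add_abs_im w).trans_lt (add_lt_add hw.1 hw.2)
  have hP : DiffContOnCl ℂ (fun w => (f (p + 1 * w) * f (p + -1 * w)) *
      (f (p + I * w) * f (p + -I * w))) U := by
    have h1 := hfac 1 (by simp)
    have h2 := hfac (-1) (by simp)
    have h3 := hfac I (by simp)
    have h4 := hfac (-I) (by simp)
    exact ⟨(h1.1.mul h2.1).mul (h3.1.mul h4.1), (h1.2.mul h2.2).mul (h3.2.mul h4.2)⟩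
  have key := Complex.norm_le_of_forall_mem_frontier_norm_le hb hP (C := 0) (fun w hw => ?_)
    (z := 0) (subset_closure (by simp [hU, hr]))
  · simpa only [norm_le_zero_iff, mul_zero, add_zero, mul_eq_zero, or_self] using key
  · rw [hUo.frontier_eq] at hw
    obtain ⟨h1, h2⟩ := hUc hw.1
    have h3 : |w.re| = r ∨ |w.im| = r := by
      by_contra! h
      exact hw.2 ⟨lt_of_le_of_ne h1 h.1, lt_of_le_of_ne h2 h.2⟩
    simp only [norm_le_zero_iff, mul_eq_zero]
    rcases h3 with h3 | h3 <;> rcases eq_or_eq_neg_of_abs_eq h3 with h | h <;>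
      rcases h0 with h0 | h0
    · exact .inr (.inr (h0 _ (by simp [h]; ring)))
    · exact .inr (.inl (h0 _ (by simp [h])))
    · exact .inr (.inl (h0 _ (by simp [h]; ring)))
    · exact .inr (.inr (h0 _ (by simp [h])))
    · exact .inl (.inr (h0 _ (by simp [h]; ring)))
    · exact .inl (.inl (h0 _ (by simp [h])))
    · exact .inl (.inl (h0 _ (by simp [h]; ring)))
    · exact .inl (.inr (h0 _ (by simp [h])))

theorem eqOn_zero_hStrip_complex {f : ℂ → ℂ} {z : ℂ} (hc : ContinuousOn f (hStrip z))
    (hd : DifferentiableOn ℂ f (interior (hStrip z))) (h0 : ∀ t : ℝ, f t = 0) :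
    EqOn f 0 (hStrip z) := by
  have hreal : ∀ y : ℂ, y.im = 0 → f y = 0 := fun y hy => by
    rw [← h0 y.re]
    congr 1
    exact Complex.ext (by simp) (by simp [hy])
  by_cases hz : z.im = 0
  · intro y hy
    exact hreal y (by simpa [hStrip, hz] using hy)
  have hnear : ∀ p ∈ im ⁻¹' Ioo (min 0 (z.im / 2)) (max 0 (z.im / 2)), f p = 0 := by
    rintro p ⟨hp1, hp2⟩
    have hp0 : 0 < |p.im| := by
      rw [abs_pos]
      rintro h
      rw [h] at hp1 hp2
      rcases lt_or_gt_of_ne hz with h' | h'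
      · rw [max_eq_left (by linarith)] at hp2
        linarith
      · rw [min_eq_left (by linarith)] at hp1
        linarith
    refine eq_zero_of_four_rotations hp0 (hc.mono fun y hy => ?_) (hd.mono fun y hy => ?_) ?_
    · rw [hStrip_eq_preimage]
      simp only [mem_ofPred_eq, mem_preimage, mem_Icc] at hy ⊢
      rw [abs_le] at hy
      grind
    · rw [interior_hStrip]
      simp only [mem_ofPred_eq, mem_preimage, mem_Ioo] at hy ⊢
      rw [abs_lt] at hy
      grind
    · rcases lt_or_gt_of_ne hz with h' | h'
      · right
        intro y hy
        rw [max_eq_left (by linarith)] at hp2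
        rw [abs_of_neg hp2] at hy
        exact hreal y (by linarith)
      · left
        intro y hy
        rw [min_eq_left (by linarith)] at hp1
        rw [abs_of_pos hp1] at hy
        exact hreal y (by linarith)
  have hint : EqOn f 0 (interior (hStrip z)) := by
    refine (hd.analyticOnNhd isOpen_interior).eqOn_zero_of_preconnected_of_eventuallyEq_zero
      (z₀ := ((z.im / 4 : ℝ) : ℂ) * I) ?_ ?_ ?_
    · rw [interior_hStrip]
      exact ((convex_Ioo _ _).linear_preimage Complex.imLm).isPreconnected
    · rw [interior_hStrip]
      simp only [mem_preimage, mem_Ioo]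
      simp
      grind
    · have ho : IsOpen (im ⁻¹' Ioo (min 0 (z.im / 2)) (max 0 (z.im / 2))) :=
        isOpen_Ioo.preimage Complex.continuous_im
      refine Filter.eventuallyEq_of_mem (ho.mem_nhds ?_) hnear
      simp only [mem_preimage, mem_Ioo]
      simp
      grind
  exact hint.of_subset_closure hc continuousOn_const interior_subset
    (hStrip_subset_closure_interior hz)

theorem eqOn_hStrip {E : Type*} [NormedAddCommGroup E] [NormedSpace ℂ E] {f g : ℂ → E} {z : ℂ}
    (hfc : ContinuousOn f (hStrip z)) (hfd : DifferentiableOn ℂ f (interior (hStrip z)))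
    (hgc : ContinuousOn g (hStrip z)) (hgd : DifferentiableOn ℂ g (interior (hStrip z)))
    (h : ∀ t : ℝ, f t = g t) : EqOn f g (hStrip z) := by
  intro y hy
  rw [← sub_eq_zero]
  refine SeparatingDual.eq_zero_of_forall_dual_eq_zero (R := ℂ) fun φ => ?_
  exact eqOn_zero_hStrip_complex (f := fun y => φ (f y - g y))
    (φ.continuous.comp_continuousOn (hfc.sub hgc))
    (φ.differentiable.comp_differentiableOn (hfd.sub hgd)) (fun t => by simp [h t]) hy

/-- `f` is an analytic continuation of the orbit `t ↦ α t a` to the strip `hStrip z`. -/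
structure IsOrbitContinuation {E : Type*} [NormedAddCommGroup E] [NormedSpace ℂ E]
    (α : ℝ → E →L[ℂ] E) (z : ℂ) (a : E) (f : ℂ → E) : Prop where
  continuousOn : ContinuousOn f (hStrip z)
  differentiableOn : DifferentiableOn ℂ f (interior (hStrip z))
  apply_ofReal : ∀ t : ℝ, f t = α t a

theorem hasContVal_iff {E : Type*} [NormedAddCommGroup E] [NormedSpace ℂ E]
    {α : ℝ → E →L[ℂ] E} {z : ℂ} {a b : E} :
    HasContVal α z a b ↔ ∃ f, IsOrbitContinuation α z a f ∧ f z = b :=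
  ⟨fun ⟨f, h1, h2, h3, h4⟩ => ⟨f, ⟨h1, h2, h3⟩, h4⟩,
    fun ⟨f, ⟨h1, h2, h3⟩, h4⟩ => ⟨f, h1, h2, h3, h4⟩⟩

section OrbitContinuation

variable {E : Type*} [NormedAddCommGroup E] [NormedSpace ℂ E] {α : ℝ → E →L[ℂ] E} {z : ℂ}

theorem IsOrbitContinuation.add {a b : E} {f g : ℂ → E} (hf : IsOrbitContinuation α z a f)
    (hg : IsOrbitContinuation α z b g) : IsOrbitContinuation α z (a + b) (f + g) :=
  ⟨hf.1.add hg.1, hf.2.add hg.2, fun t => by simp [hf.3 t, hg.3 t]⟩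

theorem IsOrbitContinuation.const_smul {a : E} {f : ℂ → E} (c : ℂ)
    (hf : IsOrbitContinuation α z a f) : IsOrbitContinuation α z (c • a) (c • f) :=
  ⟨hf.1.const_smul c, hf.2.const_smul c, fun t => by simp [hf.3 t]⟩

theorem IsOrbitContinuation.sub {a b : E} {f g : ℂ → E} (hf : IsOrbitContinuation α z a f)
    (hg : IsOrbitContinuation α z b g) : IsOrbitContinuation α z (a - b) (f - g) :=
  ⟨hf.1.sub hg.1, hf.2.sub hg.2, fun t => by simp [hf.3 t, hg.3 t]⟩

theorem IsOrbitContinuation.map {a : E} {f : ℂ → E} (T : E →L[ℂ] E)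
    (hT : ∀ t x, T (α t x) = α t (T x)) (hf : IsOrbitContinuation α z a f) :
    IsOrbitContinuation α z (T a) (fun y => T (f y)) :=
  ⟨T.continuous.comp_continuousOn hf.1, T.differentiable.comp_differentiableOn hf.2,
    fun t => by rw [hf.3, hT]⟩

theorem IsOrbitContinuation.eqOn {a : E} {f g : ℂ → E} (hf : IsOrbitContinuation α z a f)
    (hg : IsOrbitContinuation α z a g) : EqOn f g (hStrip z) :=
  eqOn_hStrip hf.1 hf.2 hg.1 hg.2 fun t => by rw [hf.3, hg.3]

theorem IsOneParamRep.apply_add (hα : IsOneParamRep α) (s t : ℝ) (x : E) :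
    α (s + t) x = α s (α t x) := by
  rw [hα.map_add]; rfl

theorem IsOneParamRep.apply_comm (hα : IsOneParamRep α) (s t : ℝ) (x : E) :
    α s (α t x) = α t (α s x) := by
  rw [← hα.apply_add, add_comm, hα.apply_add]

theorem IsOneParamRep.norm_apply_le (hα : IsOneParamRep α) (t : ℝ) (x : E) : ‖α t x‖ ≤ ‖x‖ := by
  simpa using (α t).le_of_opNorm_le (hα.norm_le t) x

theorem IsOrbitContinuation.apply_add_ofReal (hα : IsOneParamRep α) {a : E} {f : ℂ → E}
    (hf : IsOrbitContinuation α z a f) (t : ℝ) {y : ℂ} (hy : y ∈ hStrip z) :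
    f (y + t) = α t (f y) := by
  have hg := hf.map (α t) fun s x => hα.apply_comm t s x
  refine eqOn_hStrip (f := fun y => f (y + t)) ?_ ?_ hg.1 hg.2 ?_ hy
  · exact hf.1.comp (by fun_prop) fun y hy => by simpa [hStrip] using hy
  · refine hf.2.comp (by fun_prop) fun y hy => ?_
    rw [interior_hStrip] at hy ⊢
    simpa using hy
  · intro s
    rw [← Complex.ofReal_add, hf.3, hf.3, add_comm, hα.apply_add]

theorem IsOrbitContinuation.norm_apply_le_of_im_eq (hα : IsOneParamRep α) {a : E} {f : ℂ → E}
    (hf : IsOrbitContinuation α z a f) {y w : ℂ} (hw : w ∈ hStrip z) (h : y.im = w.im) :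
    ‖f y‖ ≤ ‖f w‖ := by
  have : y = w + ((y.re - w.re : ℝ) : ℂ) := Complex.ext (by simp) (by simp [h])
  rw [this, hf.apply_add_ofReal hα _ hw]
  exact hα.norm_apply_le _ _

/-- Three lines theorem for continued orbits. -/
theorem IsOrbitContinuation.norm_le (hα : IsOneParamRep α) {a : E} {f : ℂ → E}
    (hf : IsOrbitContinuation α z a f) {y : ℂ} (hy : y ∈ hStrip z) :
    ‖f y‖ ≤ max ‖a‖ ‖f z‖ := by
  have hf0 : ‖f 0‖ ≤ ‖a‖ := by
    rw [← Complex.ofReal_zero, hf.3]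
    exact hα.norm_apply_le _ _
  have h0 : (0 : ℂ) ∈ hStrip z := by simpa using ofReal_mem_hStrip z 0
  have hlow : ∀ w : ℂ, w.im = 0 → ‖f w‖ ≤ max ‖a‖ ‖f z‖ := fun w hw =>
    (hf.norm_apply_le_of_im_eq hα h0 (by simpa using hw)).trans (hf0.trans (le_max_left _ _))
  have hhigh : ∀ w : ℂ, w.im = z.im → ‖f w‖ ≤ max ‖a‖ ‖f z‖ := fun w hw =>
    (hf.norm_apply_le_of_im_eq hα (self_mem_hStrip z) hw).trans (le_max_right _ _)
  obtain ⟨M, hM⟩ : ∃ M, ∀ w ∈ hStrip z, ‖f w‖ ≤ M := by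
    have hcont : ContinuousOn (fun s : ℝ => f (s * I)) (uIcc 0 z.im) :=
      hf.1.comp (by fun_prop) fun s hs => by simpa [hStrip] using hs
    obtain ⟨M, hM⟩ := isCompact_uIcc.exists_bound_of_continuousOn hcont
    refine ⟨M, fun w hw => ?_⟩
    exact (hf.norm_apply_le_of_im_eq hα (w := w.im * I) (by simpa [hStrip] using hw)
      (by simp)).trans (hM _ hw)
  by_cases hz : z.im = 0
  · exact hlow y (by simpa [hStrip, hz] using hy)
  rw [hStrip_eq_preimage] at hy
  refine PhragmenLindelof.horizontal_strip (a := min 0 z.im) (b := max 0 z.im) (f := f)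
    ⟨interior_hStrip z ▸ hf.2, hf.1.mono ?_⟩ ?_ ?_ ?_ hy.1 hy.2
  · rw [Complex.closure_preimage_im, hStrip_eq_preimage]
    exact preimage_mono (closure_minimal Ioo_subset_Icc_self isClosed_Icc)
  · refine ⟨0, div_pos Real.pi_pos ?_, 0, ?_⟩
    · rcases lt_or_gt_of_ne hz with h | h
      · simp [h.le, h]
      · simp [h.le, h]
    · refine Asymptotics.IsBigO.of_bound M ?_
      refine Filter.mem_inf_of_right fun w hw => ?_
      simpa using hM w (interior_subset (s := hStrip z) (by rwa [interior_hStrip]))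
  · intro w hw
    rcases min_choice 0 z.im with h | h <;> rw [h] at hw
    exacts [hlow w hw, hhigh w hw]
  · intro w hw
    rcases max_choice 0 z.im with h | h <;> rw [h] at hw
    exacts [hlow w hw, hhigh w hw]

/-- The graph of the analytic continuation `α_z` as a linear subspace. -/
def continuationGraph (α : ℝ → E →L[ℂ] E) (z : ℂ) : Submodule ℂ (E × E) where
  carrier := {p | HasContVal α z p.1 p.2}
  add_mem' := by
    rintro ⟨a, a'⟩ ⟨b, b'⟩ ha hb
    obtain ⟨f, hf, hfz⟩ := hasContVal_iff.1 ha
    obtain ⟨g, hg, hgz⟩ := hasContVal_iff.1 hb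
    exact hasContVal_iff.2 ⟨f + g, hf.add hg, by simp_all⟩
  zero_mem' := ⟨0, continuousOn_const, differentiableOn_const 0, by simp, rfl⟩
  smul_mem' := by
    rintro c ⟨a, a'⟩ ha
    obtain ⟨f, hf, hfz⟩ := hasContVal_iff.1 ha
    exact hasContVal_iff.2 ⟨c • f, hf.const_smul c, by simp_all⟩

theorem IsOneParamRep.isClosed_continuationGraph [CompleteSpace E] (hα : IsOneParamRep α) :
    IsClosed (continuationGraph α z : Set (E × E)) := by
  refine IsSeqClosed.isClosed fun p q hp hpq => ?_
  have hp' : ∀ n, ∃ f, IsOrbitContinuation α z (p n).1 f ∧ f z = (p n).2 :=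
    fun n => hasContVal_iff.1 (hp n)
  choose f hf hfz using hp'
  have hdist : ∀ m n, ∀ y ∈ hStrip z, dist (f m y) (f n y) ≤ dist (p m) (p n) := by
    intro m n y hy
    have := ((hf m).sub (hf n)).norm_le hα hy
    simpa [dist_eq_norm, Prod.norm_def, hfz] using this
  have hcau : UniformCauchySeqOn f atTop (hStrip z) := by
    rw [Metric.uniformCauchySeqOn_iff]
    intro ε hε
    obtain ⟨N, hN⟩ := Metric.cauchySeq_iff.1 hpq.cauchySeq ε hε
    exact ⟨N, fun m hm n hn y hy => (hdist m n y hy).trans_lt (hN m hm n hn)⟩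
  have hlim : ∀ y, ∃ l, y ∈ hStrip z → Tendsto (fun n => f n y) atTop (𝓝 l) := by
    intro y
    by_cases hy : y ∈ hStrip z
    · obtain ⟨l, hl⟩ := cauchySeq_tendsto_of_complete (hcau.cauchySeq hy)
      exact ⟨l, fun _ => hl⟩
    · exact ⟨0, fun h => absurd h hy⟩
  choose g hg using hlim
  have hunif := hcau.tendstoUniformlyOn_of_tendsto fun y hy => hg y hy
  refine hasContVal_iff.2 ⟨g, ⟨?_, ?_, ?_⟩, ?_⟩
  · exact hunif.continuousOn (Frequently.of_forall fun n => (hf n).1)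
  · exact (hunif.mono interior_subset).tendstoLocallyUniformlyOn.differentiableOn
      (Eventually.of_forall fun n => (hf n).2) isOpen_interior
  · intro t
    refine tendsto_nhds_unique (hg t (ofReal_mem_hStrip z t)) ?_
    simp only [(hf _).3]
    exact ((α t).continuous.tendsto _).comp ((continuous_fst.tendsto q).comp hpq)
  · refine tendsto_nhds_unique (hg z (self_mem_hStrip z)) ?_
    simp only [hfz]
    exact (continuous_snd.tendsto q).comp hpq

end OrbitContinuation

section GaussianSmearing

open ProbabilityTheory

variable {E : Type*} [NormedAddCommGroup E] [NormedSpace ℂ E]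

theorem integral_comp_add_gaussianReal (h : ℝ → E) (v : ℝ) :
    ∫ t, h (t + v) ∂gaussianReal 0 1 =
      ∫ t, cexp (t * v - v ^ 2 / 2) • h t ∂gaussianReal 0 1 := by
  have h1 : ∫ t, h (t + v) ∂gaussianReal 0 1 = ∫ t, h t ∂gaussianReal v 1 := by
    have h2 := gaussianReal_map_add_const (μ := 0) (v := 1) v
    rw [zero_add] at h2
    rw [← h2, (measurableEmbedding_addRight v).integral_map]
  rw [h1, integral_gaussianReal_eq_integral_smul one_ne_zero,
    integral_gaussianReal_eq_integral_smul one_ne_zero]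
  refine integral_congr_ae (Eventually.of_forall fun t => ?_)
  have h3 : gaussianPDFReal v 1 t = gaussianPDFReal 0 1 t * Real.exp (t * v - v ^ 2 / 2) := by
    simp only [gaussianPDFReal]
    rw [mul_assoc _ (Real.exp _), ← Real.exp_add]
    congr 2
    simp
    ring
  have h4 : cexp (t * v - v ^ 2 / 2) = ((Real.exp (t * v - v ^ 2 / 2) : ℝ) : ℂ) := by
    push_cast
    rfl
  simp only [h3, h4, mul_smul, Complex.coe_smul]

theorem integrable_cexp_mul_gaussianReal (v : ℂ) :
    Integrable (fun t : ℝ => cexp (t * v)) (gaussianReal 0 1) := by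
  refine (integrable_exp_mul_gaussianReal (μ := 0) (v := 1) v.re).mono'
    (by fun_prop) (Eventually.of_forall fun t => ?_)
  rw [Complex.norm_exp]
  simp [mul_comm]

theorem differentiable_integral_cexp_smul {g : ℝ → E} (hg : Continuous g) {M : ℝ}
    (hM : ∀ t, ‖g t‖ ≤ M) :
    Differentiable ℂ fun v : ℂ => ∫ t : ℝ, cexp (t * v) • g t ∂gaussianReal 0 1 := by
  intro v₀
  set R : ℝ := ‖v₀‖ + 1
  have hM0 : 0 ≤ M := (norm_nonneg _).trans (hM 0)
  refine (hasDerivAt_integral_of_dominated_loc_of_deriv_le (Metric.ball_mem_nhds v₀ one_pos)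
    (F' := fun v (t : ℝ) => (cexp (t * v) * t) • g t)
    (bound := fun t => (Real.exp ((R + 1) * t) + Real.exp (-(R + 1) * t)) * M)
    (Eventually.of_forall fun v => ?_) ?_ ?_ (Eventually.of_forall fun t v hv => ?_) ?_
    (Eventually.of_forall fun t v _ => ?_)).2.differentiableAt
  · exact Continuous.aestronglyMeasurable (by fun_prop)
  · exact (integrable_cexp_mul_gaussianReal v₀).smul_bdd M
      hg.aestronglyMeasurable (Eventually.of_forall hM)
  · exact Continuous.aestronglyMeasurable (by fun_prop)
  · rw [norm_smul, norm_mul, Complex.norm_exp, Complex.norm_real, Real.norm_eq_abs]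
    refine mul_le_mul ?_ (hM t) (norm_nonneg _) (by positivity)
    have hvR : |v.re| ≤ R := by
      refine (Complex.abs_re_le_norm v).trans ?_
      have h1 : ‖v - v₀‖ < 1 := by simpa [dist_eq_norm] using hv
      have h2 := norm_sub_norm_le v v₀
      linarith
    have h1 : ((t : ℂ) * v).re ≤ |t| * R := by
      rw [Complex.re_ofReal_mul]
      calc t * v.re ≤ |t * v.re| := le_abs_self _
        _ = |t| * |v.re| := abs_mul _ _
        _ ≤ |t| * R := by gcongr
    have h2 : |t| ≤ Real.exp |t| := by linarith [Real.add_one_le_exp |t|]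
    calc Real.exp ((t : ℂ) * v).re * |t| ≤ Real.exp (|t| * R) * Real.exp |t| := by gcongr
      _ = Real.exp ((R + 1) * |t|) := by rw [← Real.exp_add]; congr 1; ring
      _ ≤ _ := by
        rcases abs_cases t with ⟨h, _⟩ | ⟨h, _⟩ <;> rw [h]
        · linarith [Real.exp_pos (-(R + 1) * t)]
        · rw [mul_neg, ← neg_mul]
          linarith [Real.exp_pos ((R + 1) * t)]
  · exact ((integrable_exp_mul_gaussianReal _).add (integrable_exp_mul_gaussianReal _)).mul_const M
  · have h1 : HasDerivAt (fun v : ℂ => cexp (t * v)) (cexp (t * v) * t) v := by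
      simpa using ((hasDerivAt_id v).const_mul (t : ℂ)).cexp
    exact h1.smul_const (g t)

variable {α : ℝ → E →L[ℂ] E}

theorem IsOneParamRep.continuous_orbit_mul (hα : IsOneParamRep α) (s : ℝ) (a : E) :
    Continuous fun t : ℝ => α (s * t) a :=
  (hα.strong_cont a).comp (by fun_prop)

theorem IsOneParamRep.integrable_smul (hα : IsOneParamRep α) {κ : ℝ → ℂ}
    (hκ : Integrable κ (gaussianReal 0 1)) (s : ℝ) (a : E) :
    Integrable (fun t => κ t • α (s * t) a) (gaussianReal 0 1) :=
  hκ.smul_bdd ‖a‖ (hα.continuous_orbit_mul s a).aestronglyMeasurable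
    (Eventually.of_forall fun _ => hα.norm_apply_le _ _)

/-- The operator `a ↦ ∫ κ(t) α_{st}(a) dγ(t)`, where `γ` is the standard Gaussian measure. -/
def IsOneParamRep.smear (hα : IsOneParamRep α) {κ : ℝ → ℂ}
    (hκ : Integrable κ (gaussianReal 0 1)) (s : ℝ) : E →L[ℂ] E :=
  LinearMap.mkContinuous
    { toFun := fun a => ∫ t, κ t • α (s * t) a ∂gaussianReal 0 1
      map_add' := fun a b => by
        rw [← integral_add (hα.integrable_smul hκ s a) (hα.integrable_smul hκ s b)]
        simp
      map_smul' := fun c a => by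
        rw [RingHom.id_apply, ← integral_smul]
        refine integral_congr_ae (Eventually.of_forall fun t => ?_)
        simp only
        rw [map_smul, smul_comm] }
    (∫ t, ‖κ t‖ ∂gaussianReal 0 1) fun a => by
      rw [← integral_mul_const]
      refine norm_integral_le_of_norm_le (hκ.norm.mul_const _) (Eventually.of_forall fun t => ?_)
      rw [norm_smul]
      exact mul_le_mul_of_nonneg_left (hα.norm_apply_le _ _) (norm_nonneg _)

theorem IsOneParamRep.smear_apply (hα : IsOneParamRep α) {κ : ℝ → ℂ}
    (hκ : Integrable κ (gaussianReal 0 1)) (s : ℝ) (a : E) :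
    hα.smear hκ s a = ∫ t, κ t • α (s * t) a ∂gaussianReal 0 1 := rfl

theorem IsOneParamRep.smear_comm [CompleteSpace E] (hα : IsOneParamRep α) {κ : ℝ → ℂ}
    (hκ : Integrable κ (gaussianReal 0 1)) (s t : ℝ) (a : E) :
    hα.smear hκ s (α t a) = α t (hα.smear hκ s a) := by
  rw [hα.smear_apply, hα.smear_apply,
    ← (α t).integral_comp_comm (hα.integrable_smul hκ s a)]
  simp only [map_smul, hα.apply_comm]

theorem integrable_gaussianKernel (v : ℂ) :
    Integrable (fun t : ℝ => cexp (t * v - v ^ 2 / 2)) (gaussianReal 0 1) := by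
  simp only [Complex.exp_sub, div_eq_mul_inv]
  exact (integrable_cexp_mul_gaussianReal v).mul_const _

/-- Smearing with the standard Gaussian, rescaled by `s`. -/
abbrev IsOneParamRep.gaussianSmear (hα : IsOneParamRep α) (s : ℝ) : E →L[ℂ] E :=
  hα.smear (integrable_const (1 : ℂ)) s

theorem IsOneParamRep.gaussianSmear_apply (hα : IsOneParamRep α) (s : ℝ) (a : E) :
    hα.gaussianSmear s a = ∫ t, α (s * t) a ∂gaussianReal 0 1 := by
  simp [IsOneParamRep.gaussianSmear, hα.smear_apply]

theorem IsOneParamRep.isOrbitContinuation_gaussianSmear [CompleteSpace E]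
    (hα : IsOneParamRep α) (z : ℂ) {s : ℝ} (hs : s ≠ 0) (a : E) :
    IsOrbitContinuation α z (hα.gaussianSmear s a)
      fun w => hα.smear (integrable_gaussianKernel (w / s)) s a := by
  have hdiff : Differentiable ℂ fun w : ℂ =>
      hα.smear (integrable_gaussianKernel (w / s)) s a := by
    have h1 := differentiable_integral_cexp_smul (hα.continuous_orbit_mul s a)
      (fun t => hα.norm_apply_le (s * t) a)
    have h2 : (fun w : ℂ => hα.smear (integrable_gaussianKernel (w / s)) s a) = fun w =>
        cexp (-(w / s) ^ 2 / 2) •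
          ∫ t : ℝ, cexp (t * (w / s)) • α (s * t) a ∂gaussianReal 0 1 := by
      funext w
      rw [hα.smear_apply, ← integral_smul]
      refine integral_congr_ae (Eventually.of_forall fun t => ?_)
      simp only [smul_smul, ← Complex.exp_add]
      congr 2
      ring
    rw [h2]
    have h3 : Differentiable ℂ fun w : ℂ => w / s := by fun_prop
    exact Differentiable.smul (by fun_prop) (h1.comp h3)
  refine ⟨hdiff.continuous.continuousOn, hdiff.differentiableOn, fun r => ?_⟩
  have h1 := integral_comp_add_gaussianReal (fun t => α (s * t) a) (r / s)
  rw [hα.gaussianSmear_apply, hα.smear_apply, ← (α r).integral_comp_comm]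
  · push_cast at h1
    rw [← h1]
    refine integral_congr_ae (Eventually.of_forall fun t => ?_)
    simp only
    rw [← hα.apply_add]
    congr 2
    field_simp
    ring
  · simpa using hα.integrable_smul (integrable_const (1 : ℂ)) s a

theorem IsOneParamRep.tendsto_gaussianSmear [CompleteSpace E] (hα : IsOneParamRep α) (a : E) :
    Tendsto (fun s => hα.gaussianSmear s a) (𝓝[≠] 0) (𝓝 a) := by
  refine Tendsto.mono_left ?_ nhdsWithin_le_nhds
  simp only [hα.gaussianSmear_apply]
  have h : Tendsto (fun s => ∫ t, α (s * t) a ∂gaussianReal 0 1) (𝓝 0)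
      (𝓝 (∫ _, a ∂gaussianReal 0 1)) := by
    refine tendsto_integral_filter_of_dominated_convergence (fun _ => ‖a‖)
      (Eventually.of_forall fun s => (hα.continuous_orbit_mul s a).aestronglyMeasurable)
      (Eventually.of_forall fun s => Eventually.of_forall fun t => hα.norm_apply_le _ _)
      (integrable_const _) (Eventually.of_forall fun t => ?_)
    have hc : Continuous fun s : ℝ => α (s * t) a := (hα.strong_cont a).comp (by fun_prop)
    simpa [hα.map_zero] using hc.tendsto 0
  simpa using h

theorem IsOneParamRep.dense_domain [CompleteSpace E] (hα : IsOneParamRep α) (z : ℂ) :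
    Dense {a : E | ∃ b, HasContVal α z a b} := fun a =>
  mem_closure_of_tendsto (hα.tendsto_gaussianSmear a) <|
    eventually_mem_nhdsWithin.mono fun _ hs =>
      ⟨_, hasContVal_iff.2 ⟨_, hα.isOrbitContinuation_gaussianSmear z hs a, rfl⟩⟩

/-- A closed invariant subspace of the graph of `α_z` with dense domain is the whole graph. -/
theorem IsOneParamRep.continuationGraph_le [CompleteSpace E] (hα : IsOneParamRep α) {z : ℂ}
    {K : Submodule ℂ (E × E)} (hK : K ≤ continuationGraph α z)
    (hclosed : IsClosed (K : Set (E × E))) (hdense : Dense {a : E | ∃ b, (a, b) ∈ K})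
    (hinv : ∀ t, ∀ p ∈ K, (α t p.1, α t p.2) ∈ K) :
    continuationGraph α z ≤ K := by
  have hval : ∀ s : ℝ, s ≠ 0 → ∀ p ∈ continuationGraph α z,
      hα.smear (integrable_gaussianKernel (z / s)) s p.1 = hα.gaussianSmear s p.2 := by
    intro s hs p hp
    obtain ⟨f, hf, hfz⟩ := hasContVal_iff.1 hp
    rw [← hfz]
    exact (hα.isOrbitContinuation_gaussianSmear z hs p.1).eqOn
      (hf.map (hα.gaussianSmear s) fun t x => hα.smear_comm _ s t x) (self_mem_hStrip z)
  have hsmear : ∀ s : ℝ, ∀ p ∈ K, (hα.gaussianSmear s p.1, hα.gaussianSmear s p.2) ∈ K := by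
    intro s p hp
    have hi : ∀ a, Integrable (fun t => α (s * t) a) (gaussianReal 0 1) := fun a => by
      simpa using hα.integrable_smul (integrable_const (1 : ℂ)) s a
    have h := (K.restrictScalars ℝ).convex.integral_mem (μ := gaussianReal 0 1)
      (f := fun t => (α (s * t) p.1, α (s * t) p.2)) hclosed
      (Eventually.of_forall fun t => hinv (s * t) p hp) ((hi _).prodMk (hi _))
    rw [integral_pair (hi _) (hi _)] at h
    simpa [hα.gaussianSmear_apply] using h
  intro p hp
  have hmem : ∀ s : ℝ, s ≠ 0 → (hα.gaussianSmear s p.1, hα.gaussianSmear s p.2) ∈ K := by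
    intro s hs
    rw [← hval s hs p hp]
    set T := hα.smear (integrable_gaussianKernel (z / s)) s
    have hcl : IsClosed {x : E | (hα.gaussianSmear s x, T x) ∈ K} :=
      hclosed.preimage (by fun_prop)
    refine hcl.closure_subset_iff.2 ?_ (hdense p.1)
    rintro x ⟨y, hxy⟩
    simp only [mem_ofPred_eq]
    rw [show T x = _ from hval s hs _ (hK hxy)]
    exact hsmear s _ hxy
  exact hclosed.mem_of_tendsto
    ((hα.tendsto_gaussianSmear p.1).prodMk_nhds (hα.tendsto_gaussianSmear p.2))
    (eventually_mem_nhdsWithin.mono hmem)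

end GaussianSmearing

section TensorProduct

open TensorProduct

variable {E F G : Type*} [NormedAddCommGroup E] [NormedSpace ℂ E] [NormedAddCommGroup F]
  [NormedSpace ℂ F] [NormedAddCommGroup G] [NormedSpace ℂ G]

/-- A sub-cross norm makes `(x, y) ↦ ι (x ⊗ₜ y)` a bounded bilinear map. -/
def subcrossBilin (ι : E ⊗[ℂ] F →ₗ[ℂ] G)
    (hcross : ∀ (x : E) (y : F), ‖ι (x ⊗ₜ[ℂ] y)‖ ≤ ‖x‖ * ‖y‖) : E →L[ℂ] F →L[ℂ] G :=
  LinearMap.mkContinuous₂ ((TensorProduct.mk ℂ E F).compr₂ ι) 1 fun x y => by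
    simpa using hcross x y

@[simp]
theorem subcrossBilin_apply (ι : E ⊗[ℂ] F →ₗ[ℂ] G)
    (hcross : ∀ (x : E) (y : F), ‖ι (x ⊗ₜ[ℂ] y)‖ ≤ ‖x‖ * ‖y‖) (x : E) (y : F) :
    subcrossBilin ι hcross x y = ι (x ⊗ₜ[ℂ] y) := rfl

/-- The closure in `G × G` of the graph of the algebraic tensor product of the restrictions of
`α_z` to `C` and of `β_z` to `D`. -/
def tensorGraphClosure (ι : E ⊗[ℂ] F →ₗ[ℂ] G) (α : ℝ → E →L[ℂ] E) (β : ℝ → F →L[ℂ] F) (z : ℂ)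
    (C : Set E) (D : Set F) : Submodule ℂ (G × G) :=
  ((Submodule.span ℂ {p : (E ⊗[ℂ] F) × (E ⊗[ℂ] F) |
    ∃ a a' b b', a ∈ C ∧ b ∈ D ∧ HasContVal α z a a' ∧ HasContVal β z b b' ∧
      p = (a ⊗ₜ[ℂ] b, a' ⊗ₜ[ℂ] b')}).map (ι.prodMap ι)).topologicalClosure

variable {ι : E ⊗[ℂ] F →ₗ[ℂ] G} {α : ℝ → E →L[ℂ] E} {β : ℝ → F →L[ℂ] F} {αβ : ℝ → G →L[ℂ] G}
  {z : ℂ} {C : Set E} {D : Set F}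

theorem isClosed_tensorGraphClosure :
    IsClosed (tensorGraphClosure ι α β z C D : Set (G × G)) :=
  Submodule.isClosed_topologicalClosure _

theorem tensorGraphClosure_le {K : Submodule ℂ (G × G)} (hK : IsClosed (K : Set (G × G)))
    (h : ∀ a a' b b', a ∈ C → b ∈ D → HasContVal α z a a' → HasContVal β z b b' →
      (ι (a ⊗ₜ[ℂ] b), ι (a' ⊗ₜ[ℂ] b')) ∈ K) :
    tensorGraphClosure ι α β z C D ≤ K := by
  refine Submodule.topologicalClosure_minimal _ ?_ hK
  rw [Submodule.map_le_iff_le_comap, Submodule.span_le]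
  rintro _ ⟨a, a', b, b', ha, hb, haa, hbb, rfl⟩
  exact h a a' b b' ha hb haa hbb

theorem tmul_mem_tensorGraphClosure {a a' : E} {b b' : F} (ha : a ∈ C) (hb : b ∈ D)
    (haa : HasContVal α z a a') (hbb : HasContVal β z b b') :
    (ι (a ⊗ₜ[ℂ] b), ι (a' ⊗ₜ[ℂ] b')) ∈ tensorGraphClosure ι α β z C D :=
  Submodule.le_topologicalClosure _
    ⟨_, Submodule.subset_span ⟨a, a', b, b', ha, hb, haa, hbb, rfl⟩, rfl⟩

theorem HasContVal.apply {a a' : E} (hα : IsOneParamRep α) (h : HasContVal α z a a') (t : ℝ) :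
    HasContVal α z (α t a) (α t a') := by
  obtain ⟨f, hf, rfl⟩ := hasContVal_iff.1 h
  exact hasContVal_iff.2 ⟨_, hf.map (α t) fun s x => hα.apply_comm t s x, rfl⟩

theorem HasContVal.tmul (hcross : ∀ (x : E) (y : F), ‖ι (x ⊗ₜ[ℂ] y)‖ ≤ ‖x‖ * ‖y‖)
    (hext : ∀ (t : ℝ) (u : E ⊗[ℂ] F),
      αβ t (ι u) = ι (TensorProduct.map (α t).toLinearMap (β t).toLinearMap u))
    {a a' : E} {b b' : F} (ha : HasContVal α z a a') (hb : HasContVal β z b b') :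
    HasContVal αβ z (ι (a ⊗ₜ[ℂ] b)) (ι (a' ⊗ₜ[ℂ] b')) := by
  obtain ⟨f, hf, rfl⟩ := hasContVal_iff.1 ha
  obtain ⟨g, hg, rfl⟩ := hasContVal_iff.1 hb
  let B := subcrossBilin ι hcross
  refine hasContVal_iff.2 ⟨fun y => B (f y) (g y), ⟨?_, ?_, fun t => ?_⟩, rfl⟩
  · exact (B.continuous.comp_continuousOn hf.1).clm_apply hg.1
  · exact (B.differentiable.comp_differentiableOn hf.2).clm_apply hg.2
  · simp [B, hext, hf.3, hg.3]

theorem tensorGraphClosure_univ [CompleteSpace E] [CompleteSpace F] [CompleteSpace G]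
    (hdense : DenseRange ι) (hcross : ∀ (x : E) (y : F), ‖ι (x ⊗ₜ[ℂ] y)‖ ≤ ‖x‖ * ‖y‖)
    (hα : IsOneParamRep α) (hβ : IsOneParamRep β) (hαβ : IsOneParamRep αβ)
    (hext : ∀ (t : ℝ) (u : E ⊗[ℂ] F),
      αβ t (ι u) = ι (TensorProduct.map (α t).toLinearMap (β t).toLinearMap u)) :
    tensorGraphClosure ι α β z univ univ = continuationGraph αβ z := by
  have hle : tensorGraphClosure ι α β z univ univ ≤ continuationGraph αβ z :=
    tensorGraphClosure_le hαβ.isClosed_continuationGraph fun a a' b b' _ _ ha hb =>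
      ha.tmul hcross hext hb
  refine le_antisymm hle (hαβ.continuationGraph_le hle
    isClosed_tensorGraphClosure ?_ fun t => ?_)
  · set L : Submodule ℂ G := (tensorGraphClosure ι α β z univ univ).map (LinearMap.fst ℂ G G)
    have hL : {x : G | ∃ y, (x, y) ∈ tensorGraphClosure ι α β z univ univ} = L := by
      ext x
      simp [L]
    rw [hL]
    have htmul : ∀ (a : E) (b : F), ι (a ⊗ₜ[ℂ] b) ∈ L.topologicalClosure := by
      intro a b
      refine map_mem_closure₂ (f := fun a b => subcrossBilin ι hcross a b) (by fun_prop)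
        (hα.dense_domain z a) (hβ.dense_domain z b) ?_
      rintro a ⟨a', ha⟩ b ⟨b', hb⟩
      exact ⟨_, tmul_mem_tensorGraphClosure (mem_univ a) (mem_univ b) ha hb, rfl⟩
    have hrange : range ι ⊆ (L.topologicalClosure : Set G) := by
      rintro _ ⟨u, rfl⟩
      rw [SetLike.mem_coe]
      induction u with
      | zero => rw [map_zero]; exact zero_mem _
      | tmul a b => exact htmul a b
      | add u v hu hv => rw [map_add]; exact add_mem hu hv
    exact dense_closure.1 (hdense.mono hrange)
  · refine tensorGraphClosure_le
      (K := (tensorGraphClosure ι α β z univ univ).comap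
        ((αβ t).toLinearMap.prodMap (αβ t).toLinearMap))
      (isClosed_tensorGraphClosure.preimage
        ((αβ t).prodMap (αβ t)).continuous) fun a a' b b' _ _ ha hb => ?_
    have h := tmul_mem_tensorGraphClosure (ι := ι) (mem_univ (α t a)) (mem_univ (β t b))
      (ha.apply hα t) (hb.apply hβ t)
    simpa [hext] using h

theorem tensorGraphClosure_of_core
    (hcross : ∀ (x : E) (y : F), ‖ι (x ⊗ₜ[ℂ] y)‖ ≤ ‖x‖ * ‖y‖)
    (hC : closure {p : E × E | p.1 ∈ C ∧ HasContVal α z p.1 p.2}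
      = {p : E × E | HasContVal α z p.1 p.2})
    (hD : closure {p : F × F | p.1 ∈ D ∧ HasContVal β z p.1 p.2}
      = {p : F × F | HasContVal β z p.1 p.2}) :
    tensorGraphClosure ι α β z C D = tensorGraphClosure ι α β z univ univ := by
  refine le_antisymm
    (tensorGraphClosure_le isClosed_tensorGraphClosure fun a a' b b' _ _ ha hb =>
      tmul_mem_tensorGraphClosure (mem_univ a) (mem_univ b) ha hb)
    (tensorGraphClosure_le isClosed_tensorGraphClosure fun a a' b b' _ _ ha hb => ?_)
  have ha' : (a, a') ∈ closure {p : E × E | p.1 ∈ C ∧ HasContVal α z p.1 p.2} := hC ▸ ha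
  have hb' : (b, b') ∈ closure {p : F × F | p.1 ∈ D ∧ HasContVal β z p.1 p.2} := hD ▸ hb
  have h := map_mem_closure₂
    (f := fun (p : E × E) (q : F × F) =>
      (subcrossBilin ι hcross p.1 q.1, subcrossBilin ι hcross p.2 q.2))
    (u := (tensorGraphClosure ι α β z C D : Set (G × G)))
    (by fun_prop) ha' hb' fun p hp q hq => tmul_mem_tensorGraphClosure hp.1 hq.1 hp.2 hq.2
  exact closure_minimal Subset.rfl isClosed_tensorGraphClosure h

end TensorProduct

open TensorProduct in
/-- Tensor products of one-parameter representations.  The completion `E ⊗_τ F` is modelled by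
a Banach space `G` together with an injective dense-range linear map
`ι : E ⊗ F → G` realizing the sub-cross norm `τ(u) = ‖ι u‖`.  If every `α_t ⊙ β_t` is
`τ`-contractive and `αβ` is the induced one-parameter representation on `G`, then for every
`z ∈ ℂ` the algebraic tensor product operator `α_z ⊙ β_z` is closable with closure
`(α ⊗_τ β)_z`, and `C ⊙ D` is a core for `(α ⊗_τ β)_z` whenever `C` is a core for `α_z` and
`D` is a core for `β_z`. -/
theorem tensor_product_continuation
    {E F G : Type*} [NormedAddCommGroup E] [NormedSpace ℂ E] [CompleteSpace E]
    [NormedAddCommGroup F] [NormedSpace ℂ F] [CompleteSpace F]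
    [NormedAddCommGroup G] [NormedSpace ℂ G] [CompleteSpace G]
    (ι : TensorProduct ℂ E F →ₗ[ℂ] G)
    (hinj : Function.Injective ι) (hdense : DenseRange ι)
    (hcross : ∀ (x : E) (y : F), ‖ι (x ⊗ₜ[ℂ] y)‖ ≤ ‖x‖ * ‖y‖)
    (α : ℝ → E →L[ℂ] E) (β : ℝ → F →L[ℂ] F) (αβ : ℝ → G →L[ℂ] G)
    (hα : IsOneParamRep α) (hβ : IsOneParamRep β) (hαβ : IsOneParamRep αβ)
    (hcontr : ∀ (t : ℝ) (u : TensorProduct ℂ E F),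
      ‖ι (TensorProduct.map (α t).toLinearMap (β t).toLinearMap u)‖ ≤ ‖ι u‖)
    (hext : ∀ (t : ℝ) (u : TensorProduct ℂ E F),
      αβ t (ι u) = ι (TensorProduct.map (α t).toLinearMap (β t).toLinearMap u))
    (z : ℂ) :
    (closure ((fun p : TensorProduct ℂ E F × TensorProduct ℂ E F => (ι p.1, ι p.2)) ''
        (Submodule.span ℂ {p : TensorProduct ℂ E F × TensorProduct ℂ E F |
          ∃ a a' b b', HasContVal α z a a' ∧ HasContVal β z b b' ∧
            p = (a ⊗ₜ[ℂ] b, a' ⊗ₜ[ℂ] b')} : Set _))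
      = {p : G × G | HasContVal αβ z p.1 p.2}) ∧
    ∀ (C : Set E) (D : Set F),
      closure {p : E × E | p.1 ∈ C ∧ HasContVal α z p.1 p.2}
          = {p : E × E | HasContVal α z p.1 p.2} →
      closure {p : F × F | p.1 ∈ D ∧ HasContVal β z p.1 p.2}
          = {p : F × F | HasContVal β z p.1 p.2} →
      closure ((fun p : TensorProduct ℂ E F × TensorProduct ℂ E F => (ι p.1, ι p.2)) ''
        (Submodule.span ℂ {p : TensorProduct ℂ E F × TensorProduct ℂ E F |
          ∃ a a' b b', a ∈ C ∧ b ∈ D ∧ HasContVal α z a a' ∧ HasContVal β z b b' ∧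
            p = (a ⊗ₜ[ℂ] b, a' ⊗ₜ[ℂ] b')} : Set _))
      = {p : G × G | HasContVal αβ z p.1 p.2} := by
  have h := tensorGraphClosure_univ (z := z) hdense hcross hα hβ hαβ hext
  refine ⟨?_, fun C D hC hD => ?_⟩
  · simp only [tensorGraphClosure, mem_univ, true_and] at h
    exact congrArg SetLike.coe h
  · exact congrArg SetLike.coe ((tensorGraphClosure_of_core hcross hC hD).trans h)
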